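/- arXiv:cmp-lg/9404001 — 10 statements merged into one kernel-verified Lean document; each statement's English description precedes it below -/
import Mathlib

section
/- Swap of two adjunctions at distinct addresses (Lemma of the Appendix): Let σ be a type, let E, A, B : List ℕ → Option σ be trees, let fA, fB : List ℕ be the foot addresses of A and B, and let t, t' : List ℕ be addresses with t ≠ t'. Then adjoin (adjoin E A t fA) B (update t' fA t) fB = adjoin (adjoin E B t' fB) A (update t fB t') fA, i.e., adjoining A at t and then B at the updated address of t' yields the same tree (as a function on all addresses) as adjoining B at t' and then A at the updated address of t. -/
/-- Adjunction of an auxiliary tree `A` with foot address `f` at address `t` in tree `E`. -/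
def adjoin {σ : Type*} (E A : List ℕ → Option σ) (t f : List ℕ) : List ℕ → Option σ :=
  fun r =>
    if t <+: r then
      let u := r.drop t.length
      if f <+: u then E (t ++ u.drop f.length) else A u
    else E r

/-- Address update after adjunction of a tree with foot `f` at address `t`. -/
def update (s f t : List ℕ) : List ℕ :=
  if t <+: s ∧ t ≠ s then t ++ f ++ s.drop t.length else s

theorem adjoin_out {σ : Type*} (E A : List ℕ → Option σ) (t f r : List ℕ) (h : ¬ t <+: r) :
    adjoin E A t f r = E r := by
  simp [adjoin, h]

theorem adjoin_mid {σ : Type*} (E A : List ℕ → Option σ) (t f u : List ℕ) (h : ¬ f <+: u) :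
    adjoin E A t f (t ++ u) = A u := by
  simp [adjoin, h]

theorem adjoin_foot {σ : Type*} (E A : List ℕ → Option σ) (t f u : List ℕ) :
    adjoin E A t f (t ++ (f ++ u)) = E (t ++ u) := by
  simp [adjoin]

theorem swap_nested {σ : Type*} (E A B : List ℕ → Option σ) (fA fB t v : List ℕ) :
    adjoin (adjoin E A t fA) B (t ++ (fA ++ v)) fB
      = adjoin (adjoin E B (t ++ v) fB) A t fA := by
  funext r
  by_cases h1 : t <+: r
  · obtain ⟨u, rfl⟩ := h1
    by_cases h2 : fA <+: u
    · obtain ⟨y, rfl⟩ := h2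
      rw [adjoin_foot]
      by_cases h3 : v <+: y
      · obtain ⟨w, rfl⟩ := h3
        have e1 : t ++ (fA ++ (v ++ w)) = (t ++ (fA ++ v)) ++ w := by simp
        have e2 : t ++ (v ++ w) = (t ++ v) ++ w := by simp
        rw [e1, e2]
        by_cases h4 : fB <+: w
        · obtain ⟨x, rfl⟩ := h4
          rw [adjoin_foot, adjoin_foot]
          have e3 : (t ++ (fA ++ v)) ++ x = t ++ (fA ++ (v ++ x)) := by simp
          rw [e3, adjoin_foot, List.append_assoc]
        · rw [adjoin_mid _ _ _ _ _ h4, adjoin_mid _ _ _ _ _ h4]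
      · rw [adjoin_out, adjoin_foot, adjoin_out]
        · rwa [List.prefix_append_right_inj]
        · rwa [List.prefix_append_right_inj, List.prefix_append_right_inj]
    · rw [adjoin_mid _ _ _ _ _ h2, adjoin_out, adjoin_mid _ _ _ _ _ h2]
      rw [List.prefix_append_right_inj]
      exact fun h => h2 ((List.prefix_append _ _).trans h)
  · have h2 : ∀ z, ¬ (t ++ z) <+: r := fun z h => h1 ((List.prefix_append _ _).trans h)
    rw [adjoin_out _ _ _ _ _ (h2 _), adjoin_out _ _ _ _ _ h1, adjoin_out _ _ _ _ _ h1,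
      adjoin_out _ _ _ _ _ (h2 _)]

theorem swap_disj {σ : Type*} (E A B : List ℕ → Option σ) (fA fB t t' r : List ℕ)
    (h : ¬ t <+: t') (h' : ¬ t' <+: t) (hr : t <+: r) :
    adjoin (adjoin E A t fA) B t' fB r = adjoin (adjoin E B t' fB) A t fA r := by
  have key : ∀ z, ¬ t' <+: t ++ z := fun z hz =>
    (List.prefix_or_prefix_of_prefix (List.prefix_append t z) hz).elim h h'
  obtain ⟨u, rfl⟩ := hr
  rw [adjoin_out _ _ _ _ _ (key _)]
  by_cases h2 : fA <+: u
  · obtain ⟨y, rfl⟩ := h2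
    rw [adjoin_foot, adjoin_foot, adjoin_out _ _ _ _ _ (key _)]
  · rw [adjoin_mid _ _ _ _ _ h2, adjoin_mid _ _ _ _ _ h2]

/-- Swap of two adjunctions at distinct addresses (Lemma of the Appendix). -/
theorem adjoin_swap {σ : Type*} (E A B : List ℕ → Option σ) (fA fB t t' : List ℕ)
    (h : t ≠ t') :
    adjoin (adjoin E A t fA) B (update t' fA t) fB
      = adjoin (adjoin E B t' fB) A (update t fB t') fA := by
  by_cases h1 : t <+: t'
  · have h2 : ¬ t' <+: t := fun h2 => h (h1.eq_of_length_le h2.length_le)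
    obtain ⟨v, rfl⟩ := h1
    have e1 : update (t ++ v) fA t = t ++ (fA ++ v) := by
      simp only [update]
      rw [if_pos ⟨List.prefix_append _ _, h⟩]
      simp
    have e2 : update t fB (t ++ v) = t := by
      simp only [update]
      rw [if_neg (fun hh => h2 hh.1)]
    rw [e1, e2, swap_nested]
  · have e1 : update t' fA t = t' := by
      simp only [update]
      rw [if_neg (fun hh => h1 hh.1)]
    rw [e1]
    by_cases h2 : t' <+: t
    · obtain ⟨v, rfl⟩ := h2
      have e2 : update (t' ++ v) fB t' = t' ++ (fB ++ v) := by
        simp only [update]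
        rw [if_pos ⟨List.prefix_append _ _, h.symm⟩]
        simp
      rw [e2, swap_nested]
    · have e2 : update t fB t' = t := by
        simp only [update]
        rw [if_neg (fun hh => h2 hh.1)]
      rw [e2]
      funext r
      by_cases h3 : t <+: r
      · exact swap_disj E A B fA fB t t' r h1 h2 h3
      · by_cases h4 : t' <+: r
        · exact (swap_disj E B A fB fA t' t r h2 h1 h4).symm
        · rw [adjoin_out _ _ _ _ _ h3, adjoin_out _ _ _ _ _ h4, adjoin_out _ _ _ _ _ h3,
            adjoin_out _ _ _ _ _ h4]
end

section
/- Adjunctions at prefix-incomparable addresses commute (case 3 of the Lemma): Let σ be a type, E, A, B : List ℕ → Option σ trees with foot addresses fA, fB, and t, t' : List ℕ addresses such that ¬ t <+: t' and ¬ t' <+: t. Then adjoin (adjoin E A t fA) B t' fB = adjoin (adjoin E B t' fB) A t fA. -/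
/-- Adjunctions at prefix-incomparable addresses commute (case 3 of the Lemma). -/
theorem adjoin_comm_incomparable {σ : Type*} (E A B : List ℕ → Option σ)
    (fA fB t t' : List ℕ) (h1 : ¬ t <+: t') (h2 : ¬ t' <+: t) :
    adjoin (adjoin E A t fA) B t' fB = adjoin (adjoin E B t' fB) A t fA := by
  have key : ∀ r, t <+: r → t' <+: r → False := fun r a b =>
    (List.prefix_or_prefix_of_prefix a b).elim h1 h2
  funext r
  have ka : ∀ x, ¬ t <+: t' ++ x := fun x h => key _ h (List.prefix_append _ _)
  have kb : ∀ x, ¬ t' <+: t ++ x := fun x h => key _ (List.prefix_append _ _) h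
  by_cases a : t <+: r
  · have b : ¬ t' <+: r := fun b => key r a b
    simp [adjoin, a, b, kb]
  · by_cases b : t' <+: r
    · simp [adjoin, a, b, ka]
    · simp [adjoin, a, b]
end

section
/- Adjunctions at nested addresses commute after address update (case t ≺ t' of the Lemma): Let σ be a type, E, A, B : List ℕ → Option σ trees with foot addresses fA, fB, and t, t' : List ℕ addresses such that t is a proper prefix of t'. Then adjoin (adjoin E A t fA) B (t ++ fA ++ t'.drop t.length) fB = adjoin (adjoin E B t' fB) A t fA. -/
/-- Adjunctions at nested addresses commute after address update (case t ≺ t' of the Lemma). -/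
theorem adjoin_comm_nested {σ : Type*} (E A B : List ℕ → Option σ)
    (fA fB t t' : List ℕ) (h1 : t <+: t') (h2 : t ≠ t') :
    adjoin (adjoin E A t fA) B (t ++ fA ++ t'.drop t.length) fB
      = adjoin (adjoin E B t' fB) A t fA := by
  obtain ⟨w, rfl⟩ := h1
  have hd : ∀ (a b : List ℕ) (n : ℕ), (a ++ b).drop (a.length + n) = b.drop n := by
    intro a b n; simp
  have hd2 : ∀ (a b : List ℕ) (n m : ℕ),
      (a ++ b).drop (a.length + n + m) = b.drop (n + m) := by
    intro a b n m; rw [Nat.add_assoc]; exact hd a b _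
  funext r
  simp only [List.drop_left]
  by_cases hr : t <+: r
  · obtain ⟨u, rfl⟩ := hr
    by_cases hu : fA <+: u
    · obtain ⟨v, rfl⟩ := hu
      by_cases hv : w <+: v
      · obtain ⟨x, rfl⟩ := hv
        by_cases hx : fB <+: x
        · obtain ⟨y, rfl⟩ := hx
          simp [adjoin, List.prefix_append_right_inj, hd, hd2]
        · simp [adjoin, List.prefix_append_right_inj, hd, hd2, hx]
      · simp [adjoin, List.prefix_append_right_inj, hv]
    · have h : ¬ (fA ++ w) <+: u := fun h => hu ((List.prefix_append _ _).trans h)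
      simp [adjoin, List.prefix_append_right_inj, hu, h]
  · have h : ∀ z, ¬ (t ++ z) <+: r := fun z h => hr ((List.prefix_append _ _).trans h)
    simp [adjoin, hr, h]
end

section
/- Commutation identity for address updates (key identity in the proof of the Proposition): For all addresses s, t, t' : List ℕ with t ≠ t' and all foot addresses fA, fB : List ℕ, update (update s fA t) fB (update t' fA t) = update (update s fB t') fA (update t fB t'). -/
theorem upd_app (t w f : List ℕ) (hw : w ≠ []) : update (t ++ w) f t = t ++ f ++ w := by
  unfold update
  rw [if_pos]
  · simp
  · exact ⟨List.prefix_append _ _, by simpa using hw⟩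

theorem upd_not (s t f : List ℕ) (h : ∀ w, w ≠ [] → s ≠ t ++ w) : update s f t = s := by
  unfold update
  rw [if_neg]
  rintro ⟨⟨w, rfl⟩, hne⟩
  exact h w (by rintro rfl; simp at hne) rfl

theorem upd_case (s t v fA fB : List ℕ) (hv : v ≠ []) :
    update (update s fA t) fB (update (t ++ v) fA t)
      = update (update s fB (t ++ v)) fA (update t fB (t ++ v)) := by
  have e : update t fB (t ++ v) = t := upd_not _ _ _ (by
    intro w _ h
    have h3 := congrArg List.length h
    have h4 := List.length_pos_iff.2 hv
    rw [List.length_append, List.length_append] at h3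
    omega)
  rw [e, upd_app _ _ _ hv]
  by_cases hs : ∃ w, w ≠ [] ∧ s = t ++ w
  · obtain ⟨w, hw, rfl⟩ := hs
    rw [upd_app _ _ _ hw]
    by_cases hx : ∃ x, x ≠ [] ∧ w = v ++ x
    · obtain ⟨x, hx, rfl⟩ := hx
      rw [← List.append_assoc (t ++ fA), upd_app _ _ _ hx, ← List.append_assoc t,
        upd_app _ _ _ hx]
      have e3 : t ++ v ++ fB ++ x = t ++ (v ++ fB ++ x) := by simp
      rw [e3, upd_app t _ _ (by simp [hv])]
      simp
    · rw [upd_not (t ++ fA ++ w), upd_not (t ++ w), upd_app _ _ _ hw]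
      · intro x h1 h2
        exact hx ⟨x, h1, by simpa using h2⟩
      · intro x h1 h2
        exact hx ⟨x, h1, by simpa using h2⟩
  · have n1 : ∀ w, w ≠ [] → s ≠ t ++ w := fun w h1 h2 => hs ⟨w, h1, h2⟩
    rw [upd_not s t _ n1, upd_not s (t ++ v), upd_not s t _ n1, upd_not]
    · intro w h1 h2
      exact n1 (fA ++ v ++ w) (by simp [h1]) (by simpa using h2)
    · intro w h1 h2
      exact n1 (v ++ w) (by simp [h1]) (by simpa using h2)

theorem upd_incomp (s t t' fA fB : List ℕ) (h1 : ¬ t <+: t') (h2 : ¬ t' <+: t)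
    (w : List ℕ) (hw : w ≠ []) (hs : s = t ++ w) :
    update (update s fA t) fB t' = update (update s fB t') fA t := by
  have key : ∀ u, update (t ++ u) fB t' = t ++ u := fun u => upd_not _ _ _ (by
    intro x _ he
    rcases List.prefix_or_prefix_of_prefix (List.prefix_append t u)
      (he ▸ List.prefix_append t' x) with h | h
    · exact h1 h
    · exact h2 h)
  subst hs
  rw [key w, upd_app _ _ _ hw, List.append_assoc, key]

/-- Commutation identity for address updates (key identity in the proof of the Proposition). -/
theorem update_comm (s t t' fA fB : List ℕ) (h : t ≠ t') :
    update (update s fA t) fB (update t' fA t)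
      = update (update s fB t') fA (update t fB t') := by
  by_cases h1 : t <+: t'
  · obtain ⟨v, rfl⟩ := h1
    exact upd_case s t v fA fB (by rintro rfl; simp at h)
  by_cases h2 : t' <+: t
  · obtain ⟨v, rfl⟩ := h2
    exact (upd_case s t' v fB fA (by rintro rfl; simp at h)).symm
  have e1 : update t' fA t = t' := upd_not _ _ _ (fun w _ hh => h1 ⟨w, hh.symm⟩)
  have e2 : update t fB t' = t := upd_not _ _ _ (fun w _ hh => h2 ⟨w, hh.symm⟩)
  rw [e1, e2]
  by_cases hs : ∃ w, w ≠ [] ∧ s = t ++ w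
  · obtain ⟨w, hw, hs⟩ := hs
    exact upd_incomp s t t' fA fB h1 h2 w hw hs
  by_cases hs' : ∃ w, w ≠ [] ∧ s = t' ++ w
  · obtain ⟨w, hw, hs'⟩ := hs'
    exact (upd_incomp s t' t fB fA h2 h1 w hw hs').symm
  have n1 : update s fA t = s := upd_not _ _ _ (fun w a b => hs ⟨w, a, b⟩)
  have n2 : update s fB t' = s := upd_not _ _ _ (fun w a b => hs' ⟨w, a, b⟩)
  rw [n1, n2, n1]
end

section
/- Explicit value of the double update in the nested subcase (subcase t ≺ t' ≺ s of the Proposition's proof): For all addresses s, t, t' : List ℕ and foot addresses fA, fB : List ℕ, if t is a proper prefix of t' and t' is a proper prefix of s, then update (update s fA t) fB (update t' fA t) = t ++ fA ++ (t'.drop t.length) ++ fB ++ (s.drop t'.length). -/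
/-- Explicit value of the double update in the nested subcase (t ≺ t' ≺ s). -/
theorem update_update_nested (s t t' fA fB : List ℕ)
    (h1 : t <+: t') (h2 : t ≠ t') (h3 : t' <+: s) (h4 : t' ≠ s) :
    update (update s fA t) fB (update t' fA t)
      = t ++ fA ++ (t'.drop t.length) ++ fB ++ (s.drop t'.length) := by
  obtain ⟨a, rfl⟩ := h1
  obtain ⟨b, rfl⟩ := h3
  have ha : a ≠ [] := by rintro rfl; simp at h2
  have hb : b ≠ [] := by rintro rfl; simp at h4
  have e1 : update (t ++ a ++ b) fA t = (t ++ fA ++ a) ++ b := by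
    unfold update
    rw [if_pos ⟨⟨a ++ b, by simp⟩, by simp [ha]⟩]
    simp [List.append_assoc]
  have e2 : update (t ++ a) fA t = t ++ fA ++ a := by
    unfold update
    rw [if_pos ⟨⟨a, rfl⟩, h2⟩]
    simp
  have e3 : ∀ p : List ℕ, update (p ++ b) fB p = p ++ fB ++ b := by
    intro p
    unfold update
    rw [if_pos ⟨⟨b, rfl⟩, by simp [hb]⟩]
    simp
  rw [e1, e2, e3, List.drop_left, List.drop_left]
end

section
/- Double update collapses when the inner adjunction address is not above s (subcases 2 and 3 of case t ≺ t' in the Proposition's proof): For all addresses s, t, t' : List ℕ and foot addresses fA, fB : List ℕ, if t is a proper prefix of t' and t' is not a proper prefix of s, then update (update s fA t) fB (update t' fA t) = update s fA t. -/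
/-- Double update collapses when the inner adjunction address is not above s. -/
theorem update_update_collapse (s t t' fA fB : List ℕ)
    (h1 : t <+: t') (h2 : t ≠ t') (h3 : ¬ (t' <+: s ∧ t' ≠ s)) :
    update (update s fA t) fB (update t' fA t) = update s fA t := by
  obtain ⟨u, rfl⟩ := h1
  have hu : u ≠ [] := by
    rintro rfl
    simp at h2
  have e1 : update (t ++ u) fA t = t ++ fA ++ u := by
    unfold update
    rw [if_pos ⟨List.prefix_append t u, h2⟩, List.drop_left]
  rw [e1]
  by_cases hs : t <+: s ∧ t ≠ s
  · obtain ⟨⟨v, rfl⟩, hne⟩ := hs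
    have e2 : update (t ++ v) fA t = t ++ fA ++ v := by
      unfold update
      rw [if_pos ⟨List.prefix_append t v, hne⟩, List.drop_left]
    rw [e2]
    unfold update
    rw [if_neg]
    rintro ⟨ha, hb⟩
    apply h3
    rw [List.prefix_append_right_inj] at ha
    exact ⟨(List.prefix_append_right_inj t).2 ha, fun h => hb (by
      rw [List.append_cancel_left h])⟩
  · have e2 : update s fA t = s := by
      unfold update
      rw [if_neg hs]
    rw [e2]
    unfold update
    rw [if_neg]
    rintro ⟨ha, hb⟩
    apply hs
    have hl := ha.length_le
    have hp := List.length_pos_of_ne_nil hu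
    rw [List.append_assoc] at ha
    refine ⟨(List.prefix_append t _).trans ha, ?_⟩
    rintro rfl
    simp only [List.length_append] at hl
    omega
end

section
/- Updates at prefix-incomparable addresses commute (incomparable case of the Proposition's proof): For all addresses s, t, t' : List ℕ with ¬ t <+: t' and ¬ t' <+: t, and all foot addresses fA, fB : List ℕ, update (update s fA t) fB t' = update (update s fB t') fA t. -/
/-- Updates at prefix-incomparable addresses commute. -/
theorem update_comm_incomparable (s t t' fA fB : List ℕ)
    (h1 : ¬ t <+: t') (h2 : ¬ t' <+: t) :
    update (update s fA t) fB t' = update (update s fB t') fA t := by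
  have key : ∀ r, t <+: r → ¬ t' <+: r := fun r ha hb =>
    (List.prefix_or_prefix_of_prefix ha hb).elim h1 h2
  have fix : ∀ r f p, ¬ p <+: r → update r f p = r := fun r f p h =>
    if_neg (fun hh => h hh.1)
  have pre : ∀ r f p, p <+: r → p <+: update r f p := by
    intro r f p h
    unfold update
    split_ifs
    · rw [List.append_assoc]
      exact List.prefix_append _ _
    · exact h
  by_cases ha : t <+: s
  · rw [fix _ fB t' (key _ (pre s fA t ha)), fix s fB t' (key s ha)]
  · rw [fix s fA t ha]
    by_cases hb : t' <+: s
    · rw [fix _ fA t (fun h => key _ h (pre s fB t' hb))]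
    · rw [fix s fB t' hb, fix s fA t ha]
end

section
/- The address-update map preserves distinctness of addresses (implicit in iterating the Lemma to prove the Proposition): For all addresses t, t', p : List ℕ and every foot address f : List ℕ, if t ≠ t' then update t f p ≠ update t' f p; that is, for fixed f and p, the function s ↦ update s f p is injective. -/
/-- The address-update map preserves distinctness of addresses. -/
theorem update_injective (t t' p f : List ℕ) (h : t ≠ t') :
    update t f p ≠ update t' f p := by
  intro he
  apply h
  have key : ∀ u : List ℕ, (p <+: p ++ u ∧ p ≠ p ++ u) ↔ u ≠ [] := by
    intro u
    simp
  unfold update at he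
  split_ifs at he with h1 h2 h2
  · obtain ⟨⟨u, rfl⟩, _⟩ := h1
    obtain ⟨⟨v, rfl⟩, _⟩ := h2
    simpa using he
  · obtain ⟨⟨u, rfl⟩, hu⟩ := h1
    exfalso
    apply h2
    rw [← he, List.append_assoc, key]
    simp at hu ⊢
    tauto
  · obtain ⟨⟨u, rfl⟩, hu⟩ := h2
    exfalso
    apply h1
    rw [he, List.append_assoc, key]
    simp at hu ⊢
    tauto
  · exact he
end

section
/- Equivalence of the two definitions of adjunction under the label-matching condition: Let σ be a type, E, A : List ℕ → Option σ trees, t : List ℕ an address, and fA : List ℕ the foot address of A. If A [] = E t and A fA = E t (the node adjoined at has the same label as the root and the foot of the auxiliary tree), then the modified adjunction satisfies all three clauses of the original definition: (i) for every r : List ℕ that does not have t as a proper prefix, adjoin E A t fA r = E r; (ii) for every u : List ℕ such that fA is not a proper prefix of u, adjoin E A t fA (t ++ u) = A u; and (iii) for every u : List ℕ, adjoin E A t fA (t ++ fA ++ u) = E (t ++ u). -/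
/-- Equivalence of the two definitions of adjunction under the label-matching condition. -/
theorem adjoin_original_clauses {σ : Type*} (E A : List ℕ → Option σ) (t fA : List ℕ)
    (hroot : A [] = E t) (hfoot : A fA = E t) :
    (∀ r : List ℕ, ¬ (t <+: r ∧ t ≠ r) → adjoin E A t fA r = E r) ∧
    (∀ u : List ℕ, ¬ (fA <+: u ∧ fA ≠ u) → adjoin E A t fA (t ++ u) = A u) ∧
    (∀ u : List ℕ, adjoin E A t fA (t ++ fA ++ u) = E (t ++ u)) := by
  refine ⟨?_, ?_, ?_⟩
  · intro r hr
    by_cases h : t <+: r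
    · have e : t = r := by
        by_contra hne
        exact hr ⟨h, hne⟩
      subst e
      by_cases hf : fA = []
      · simp [adjoin, hf]
      · simp [adjoin, hf, hroot]
    · simp [adjoin, h]
  · intro u hu
    by_cases h : fA <+: u
    · have e : fA = u := by
        by_contra hne
        exact hu ⟨h, hne⟩
      subst e
      simp [adjoin, hfoot]
    · simp [adjoin, h]
  · intro u
    simp [adjoin, List.append_assoc]
end

section
/- Every independent adjunction is replaceable by a dependent one (claim of Section 2): Let σ be a type, E, A, B : List ℕ → Option σ trees with foot addresses fA, fB, and t : List ℕ an address. Then adjoining A at t in E and then adjoining B at the same address t yields the same tree as adjoining at t in E the single derived auxiliary tree obtained by adjoining B at the root of A: adjoin (adjoin E A t fA) B t fB = adjoin E (adjoin A B [] fB) t (fB ++ fA). (Here adjoin A B [] fB is B adjoined at the root address [] of A, and the foot address of every node of A is shifted to fB ++ fA.) -/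
/-- Every independent adjunction is replaceable by a dependent one (Section 2). -/
theorem independent_to_dependent {σ : Type*} (E A B : List ℕ → Option σ)
    (fA fB t : List ℕ) :
    adjoin (adjoin E A t fA) B t fB
      = adjoin E (adjoin A B [] fB) t (fB ++ fA) := by
  funext r
  by_cases ht : t <+: r
  · obtain ⟨u, rfl⟩ := ht
    by_cases hB : fB <+: u
    · obtain ⟨v, rfl⟩ := hB
      by_cases hA : fA <+: v
      · obtain ⟨w, rfl⟩ := hA
        simp [adjoin, List.prefix_append_right_inj]
      · simp [adjoin, List.prefix_append_right_inj, hA]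
    · have h : ¬ (fB ++ fA) <+: u := fun h => hB ((List.prefix_append _ _).trans h)
      simp [adjoin, hB, h]
  · simp [adjoin, ht]
end
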